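/- arXiv:1305.4714 — 2 statements merged into one kernel-verified Lean document; each statement's English description precedes it below -/
import Mathlib

section
/- (Rate of convergence to the asymptotic momenta, equation (2.3)) Assume Assumption A(μ) with μ > 0. Let (y,η) : ℝ → ℝ^d × ℝ^d solve the Hamilton equations for k, and suppose there exist M, c, C > 0 such that |η(t)| ≤ M and |y(t)| ≥ c|t| − C for all t ∈ ℝ. Then the limits ξ± = lim_{t→±∞} η(t) exist, and there exists C' > 0 such that |η(t) − ξ₊| ≤ C'⟨t⟩^{−μ} for all t ≥ 0 and |η(t) − ξ₋| ≤ C'⟨t⟩^{−μ} for all t ≤ 0. -/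
open Filter MeasureTheory
open scoped Topology BigOperators

noncomputable section

abbrev E (d : ℕ) := EuclideanSpace ℝ (Fin d)

/-- Japanese bracket `⟨x⟩ = (1+|x|²)^{1/2}`. -/
def jap {d : ℕ} (x : E d) : ℝ := Real.sqrt (1 + ‖x‖ ^ 2)

/-- Japanese bracket of a real number. -/
def japr (t : ℝ) : ℝ := Real.sqrt (1 + t ^ 2)

/-- The kinetic energy symbol `k(x,ξ) = (1/2) Σ a_{mn}(x) ξ_m ξ_n`. -/
def kk {d : ℕ} (a : Fin d → Fin d → E d → ℝ) (x ξ : E d) : ℝ :=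
  (1 / 2) * ∑ m : Fin d, ∑ n : Fin d, a m n x * ξ m * ξ n

/-- `(y, η)` solves the Hamilton equations for the Hamiltonian `h`. -/
def IsHamiltonSol {d : ℕ} (h : E d → E d → ℝ) (y η : ℝ → E d) : Prop :=
  ∀ t : ℝ, HasDerivAt y (gradient (h (y t)) (η t)) t ∧
    HasDerivAt η (-gradient (fun x => h x (η t)) (y t)) t

/-- Assumption A(μ): smoothness, symmetry, positive definiteness, and symbol-type decay. -/
def AssumptionA {d : ℕ} (μ : ℝ) (a : Fin d → Fin d → E d → ℝ) (V : E d → ℝ) : Prop :=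
  (∀ m n, ContDiff ℝ (⊤ : ℕ∞) (a m n)) ∧ ContDiff ℝ (⊤ : ℕ∞) V ∧
  (∀ m n x, a m n x = a n m x) ∧
  (∀ (x ξ : E d), ξ ≠ 0 → 0 < ∑ m : Fin d, ∑ n : Fin d, a m n x * ξ m * ξ n) ∧
  (∀ m n (j : ℕ), ∃ C > 0, ∀ x : E d,
    ‖iteratedFDeriv ℝ j (fun z => a m n z - if m = n then (1 : ℝ) else 0) x‖
      ≤ C * jap x ^ (-μ - (j : ℝ))) ∧
  (∀ j : ℕ, ∃ C > 0, ∀ x : E d,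
    ‖iteratedFDeriv ℝ j V x‖ ≤ C * jap x ^ (2 - μ - (j : ℝ)))

lemma aux_conv {F : Type*} [NormedAddCommGroup F] [NormedSpace ℝ F] [CompleteSpace F]
    (f f' : ℝ → F) (K μ : ℝ) (hK : 0 ≤ K) (hμ : 0 < μ)
    (hf : ∀ t, HasDerivAt f (f' t) t)
    (hb : ∀ t, 0 ≤ t → ‖f' t‖ ≤ K * (1 + t) ^ (-μ - 1)) :
    ∃ l, Tendsto f atTop (𝓝 l) ∧ ∀ t, 0 ≤ t → ‖f t - l‖ ≤ K / μ * (1 + t) ^ (-μ) := by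
  set B : ℝ → ℝ := fun t => K / μ * (1 + t) ^ (-μ) with hB
  have hB' : ∀ t, 0 ≤ t → HasDerivAt B (-(K * (1 + t) ^ (-μ - 1))) t := by
    intro t ht
    have h1 : HasDerivAt (fun s : ℝ => 1 + s) 1 t := (hasDerivAt_id t).const_add 1
    have h2 := (h1.rpow_const (p := -μ) (Or.inl (by positivity))).const_mul (K / μ)
    have h3 : K / μ * (1 * -μ * (1 + t) ^ (-μ - 1)) = -(K * (1 + t) ^ (-μ - 1)) := by
      have : K / μ * (1 * -μ * (1 + t) ^ (-μ - 1)) = -(K / μ * μ * (1 + t) ^ (-μ - 1)) := by ring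
      rw [this, div_mul_cancel₀ _ hμ.ne']
    exact h3 ▸ h2
  have hB0 : ∀ t, 0 ≤ t → 0 ≤ B t := fun t ht => by simp only [hB]; positivity
  have key : ∀ s t, 0 ≤ s → s ≤ t → ‖f t - f s‖ ≤ B s - B t := by
    intro s t hs hst
    refine image_norm_le_of_norm_deriv_right_le_deriv_boundary' (a := s) (b := t)
      (f := fun x => f x - f s) (f' := f') (B := fun x => B s - B x)
      (B' := fun x => K * (1 + x) ^ (-μ - 1)) ?_ ?_ ?_ ?_ ?_ ?_ ⟨hst, le_rfl⟩
    · exact fun x _ => ((hf x).sub_const _).continuousAt.continuousWithinAt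
    · exact fun x _ => ((hf x).sub_const _).hasDerivWithinAt
    · simp
    · exact fun x hx => ((hB' x (hs.trans hx.1)).const_sub _).continuousAt.continuousWithinAt
    · intro x hx
      simpa using ((hB' x (hs.trans hx.1)).const_sub (B s)).hasDerivWithinAt (s := Set.Ici x)
    · exact fun x hx => hb x (hs.trans hx.1)
  have hBt : Tendsto B atTop (𝓝 0) := by
    have h1 : Tendsto (fun t : ℝ => 1 + t) atTop atTop := tendsto_atTop_add_const_left _ _ tendsto_id
    have := ((tendsto_rpow_neg_atTop hμ).comp h1).const_mul (K / μ)
    simpa [hB, Function.comp_def] using this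
  have hmax : Tendsto (fun t : ℝ => max t 0) atTop atTop :=
    tendsto_atTop_mono (fun t => le_max_left t 0) tendsto_id
  have hanti : ∀ s t, 0 ≤ s → s ≤ t → B t ≤ B s := fun s t hs hst => by
    have := (norm_nonneg _).trans (key s t hs hst); linarith
  have hc : CauchySeq (fun t : ℝ => f (max t 0)) := by
    refine cauchySeq_of_le_tendsto_0 (fun N => B (max N 0)) ?_ (hBt.comp hmax)
    have main : ∀ n m N : ℝ, N ≤ n → n ≤ m →
        ‖f (max m 0) - f (max n 0)‖ ≤ B (max N 0) := by
      intro n m N h1 h2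
      have a1 := key (max n 0) (max m 0) (le_max_right _ _) (max_le_max_right 0 h2)
      have a2 := hB0 (max m 0) (le_max_right _ _)
      have a3 := hanti (max N 0) (max n 0) (le_max_right _ _) (max_le_max_right 0 h1)
      linarith
    intro n m N hn hm
    rcases le_total n m with h | h
    · rw [dist_comm, dist_eq_norm]; exact main n m N hn h
    · rw [dist_eq_norm]; exact main m n N hm h
  obtain ⟨l, hl⟩ := cauchySeq_tendsto_of_complete hc
  have hl' : Tendsto f atTop (𝓝 l) := by
    refine hl.congr' ?_
    filter_upwards [eventually_ge_atTop (0 : ℝ)] with t ht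
    rw [max_eq_left ht]
  refine ⟨l, hl', fun t ht => ?_⟩
  have h1 : Tendsto (fun s => ‖f t - f s‖) atTop (𝓝 ‖f t - l‖) := (hl'.const_sub (f t)).norm
  refine le_of_tendsto h1 ?_
  filter_upwards [eventually_ge_atTop t] with s hs
  rw [norm_sub_rev]
  have := key t s ht hs
  have := hB0 s (ht.trans hs)
  linarith

lemma aux_grad {d : ℕ} (a : Fin d → Fin d → E d → ℝ)
    (ha : ∀ m n, Differentiable ℝ (a m n)) (x ξ : E d) (M : ℝ) (hξ : ‖ξ‖ ≤ M)
    (D : Fin d → Fin d → ℝ) (r : ℝ) (hD : ∀ m n, ‖fderiv ℝ (a m n) x‖ ≤ D m n * r) :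
    ‖gradient (fun x => kk a x ξ) x‖ ≤ (∑ m, ∑ n, D m n * M * M) * r := by
  have hM : 0 ≤ M := (norm_nonneg _).trans hξ
  have h : HasFDerivAt (fun x => kk a x ξ)
      ((1 / 2 : ℝ) • ∑ m, ∑ n, (ξ n) • (ξ m) • fderiv ℝ (a m n) x) x := by
    unfold kk
    refine HasFDerivAt.const_mul ?_ _
    refine HasFDerivAt.fun_sum fun m _ => HasFDerivAt.fun_sum fun n _ => ?_
    exact (((ha m n x).hasFDerivAt).mul_const (ξ m)).mul_const (ξ n)
  rw [gradient, LinearIsometryEquiv.norm_map, h.fderiv, norm_smul]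
  have hs : ‖∑ m, ∑ n, (ξ n) • (ξ m) • fderiv ℝ (a m n) x‖ ≤ (∑ m, ∑ n, D m n * M * M) * r := by
    rw [Finset.sum_mul]
    refine (norm_sum_le _ _).trans (Finset.sum_le_sum fun m _ => ?_)
    rw [Finset.sum_mul]
    refine (norm_sum_le _ _).trans (Finset.sum_le_sum fun n _ => ?_)
    rw [norm_smul, norm_smul]
    have h1 : ‖ξ m‖ ≤ M := (PiLp.norm_apply_le ξ m).trans hξ
    have h2 : ‖ξ n‖ ≤ M := (PiLp.norm_apply_le ξ n).trans hξ
    calc ‖ξ n‖ * (‖ξ m‖ * ‖fderiv ℝ (a m n) x‖) ≤ M * (M * (D m n * r)) := by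
          gcongr
          exact hD m n
      _ = _ := by ring
  have : ‖(1 / 2 : ℝ)‖ = 1 / 2 := by norm_num
  rw [this]
  have := norm_nonneg (∑ m, ∑ n, (ξ n) • (ξ m) • fderiv ℝ (a m n) x)
  linarith

/-- Rate of convergence to the asymptotic momenta (eq. (2.3)). -/
theorem stmt4 (d : ℕ) (hd : 1 ≤ d) (μ : ℝ) (hμ : 0 < μ)
    (a : Fin d → Fin d → E d → ℝ) (V : E d → ℝ) (hA : AssumptionA μ a V)
    (y η : ℝ → E d) (hHam : IsHamiltonSol (kk a) y η)
    (M c C : ℝ) (hM : 0 < M) (hc : 0 < c) (hC : 0 < C)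
    (hηbd : ∀ t : ℝ, ‖η t‖ ≤ M) (hnt : ∀ t : ℝ, c * |t| - C ≤ ‖y t‖) :
    ∃ ξp ξm : E d, Tendsto η atTop (𝓝 ξp) ∧ Tendsto η atBot (𝓝 ξm) ∧
      ∃ C' > 0, (∀ t : ℝ, 0 ≤ t → ‖η t - ξp‖ ≤ C' * japr t ^ (-μ)) ∧
        (∀ t : ℝ, t ≤ 0 → ‖η t - ξm‖ ≤ C' * japr t ^ (-μ)) := by
  obtain ⟨hsm, -, -, -, hdec, -⟩ := hA
  choose D hDpos hD using fun m n => hdec m n 1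
  set δ : ℝ := c / (1 + C + c) with hδ
  have hδ0 : 0 < δ := by positivity
  have hjap : ∀ t, δ * (1 + |t|) ≤ jap (y t) := by
    intro t
    have h1 : 1 ≤ jap (y t) := by
      unfold jap; apply Real.le_sqrt_of_sq_le; nlinarith [sq_nonneg ‖y t‖]
    have h2 : ‖y t‖ ≤ jap (y t) := by
      unfold jap; apply Real.le_sqrt_of_sq_le; linarith
    have h3 := hnt t
    rw [hδ, div_mul_eq_mul_div, div_le_iff₀ (by positivity)]
    nlinarith
  set S : ℝ := ∑ m, ∑ n, D m n * M * M with hS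
  have hS0 : 0 ≤ S := Finset.sum_nonneg fun m _ => Finset.sum_nonneg fun n _ => by
    have := hDpos m n; positivity
  set K : ℝ := S * δ ^ (-μ - 1) with hK
  have hK0 : 0 ≤ K := by positivity
  have hbd : ∀ t, ‖gradient (fun x => kk a x (η t)) (y t)‖ ≤ K * (1 + |t|) ^ (-μ - 1) := by
    intro t
    have h1 := aux_grad a (fun m n => (hsm m n).differentiable (by simp)) (y t) (η t) M (hηbd t)
      D (jap (y t) ^ (-μ - 1)) (fun m n => by
        have := hD m n (y t)
        rw [norm_iteratedFDeriv_one, fderiv_sub_const] at this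
        simpa using this)
    refine h1.trans ?_
    rw [hK, mul_assoc, ← Real.mul_rpow hδ0.le (by positivity)]
    refine mul_le_mul_of_nonneg_left ?_ hS0
    exact Real.rpow_le_rpow_of_nonpos (by positivity) (hjap t) (by linarith)
  have hjr : ∀ t : ℝ, (1 + |t|) ^ (-μ) ≤ japr t ^ (-μ) := by
    intro t
    have h0 : 0 < japr t := Real.sqrt_pos.2 (by positivity)
    refine Real.rpow_le_rpow_of_nonpos h0 ?_ (by linarith)
    unfold japr
    apply Real.sqrt_le_iff.2 ⟨by positivity, ?_⟩
    nlinarith [abs_nonneg t, sq_abs t]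
  obtain ⟨ξp, hp1, hp2⟩ := aux_conv η _ K μ hK0 hμ (fun t => (hHam t).2) (fun t ht => by
    rw [norm_neg]; simpa [abs_of_nonneg ht] using hbd t)
  obtain ⟨ξm, hm1, hm2⟩ := aux_conv (fun t => η (-t))
    (fun t => gradient (fun x => kk a x (η (-t))) (y (-t))) K μ hK0 hμ
    (fun t => by
      simpa [Function.comp_def] using (hHam (-t)).2.scomp t (hasDerivAt_neg t)) (fun t ht => by
    simpa [abs_of_nonneg ht] using hbd (-t))
  refine ⟨ξp, ξm, hp1, ?_, K / μ + 1, by positivity, fun t ht => ?_, fun t ht => ?_⟩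
  · simpa [Function.comp_def] using hm1.comp tendsto_neg_atBot_atTop
  · have h := hp2 t ht
    have h1 := hjr t
    rw [abs_of_nonneg ht] at h1
    have h2 : 0 ≤ (1 + t) ^ (-μ) := by positivity
    exact h.trans (mul_le_mul (by linarith) h1 h2 (by positivity))
  · have h := hm2 (-t) (by linarith)
    have h1 := hjr t
    rw [abs_of_nonpos ht] at h1
    have h2 : 0 ≤ (1 + -t) ^ (-μ) := Real.rpow_nonneg (by linarith) _
    rw [neg_neg] at h
    exact h.trans (mul_le_mul (by linarith) h1 h2 (by positivity))
end
end

section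
/- (Theorem 6, high-energy asymptotics of the momentum) Assume Assumption C and fix T > 0 and (x₀,ξ₀) ∈ ℝ^d × ℝ^d with ξ₀ ≠ 0. Let (y,η) solve the Hamilton equations for k with y(0)=x₀, η(0)=ξ₀, and suppose |y(s)| ≥ c|s| − C for all s ∈ ℝ (with c, C > 0), so that ξ± = lim_{s→±∞} η(s) exist. For each λ ≥ 1, let (x_λ, ξ_λ) solve the Hamilton equations for p with x_λ(0)=x₀, ξ_λ(0)=λξ₀, and suppose there exist λ₀ ≥ 1 and c', C', M > 0 such that |x_λ(s)| ≥ c'λ|s| − C' and |ξ_λ(s)| ≤ Mλ for all |s| ≤ T and λ ≥ λ₀. Then for every t with 0 < t ≤ T, lim_{λ→∞} λ^{−1}·ξ_λ(t) = ξ₊, and for every t with −T ≤ t < 0, lim_{λ→∞} λ^{−1}·ξ_λ(t) = ξ₋. -/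
open Filter MeasureTheory
open scoped Topology BigOperators

noncomputable section

/-- Assumption C (with long range exponent `μ` and short range exponent `ν`). -/
def AssumptionC {d : ℕ} (μ ν : ℝ) (a : Fin d → Fin d → E d → ℝ) (VL VS : E d → ℝ) : Prop :=
  (∀ m n, ContDiff ℝ (⊤ : ℕ∞) (a m n)) ∧
  (∀ m n x, a m n x = a n m x) ∧
  (∀ (x ξ : E d), ξ ≠ 0 → 0 < ∑ m : Fin d, ∑ n : Fin d, a m n x * ξ m * ξ n) ∧
  (∀ m n (j : ℕ), ∃ C > 0, ∀ x : E d,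
    ‖iteratedFDeriv ℝ j (fun z => a m n z - if m = n then (1 : ℝ) else 0) x‖
      ≤ C * jap x ^ (-μ - (j : ℝ))) ∧
  ContDiff ℝ (⊤ : ℕ∞) VL ∧ ContDiff ℝ (⊤ : ℕ∞) VS ∧
  (∀ j : ℕ, ∃ C > 0, ∀ x : E d,
    ‖iteratedFDeriv ℝ j VL x‖ ≤ C * jap x ^ (2 - μ - (j : ℝ))) ∧
  (∀ j : ℕ, ∃ C > 0, ∀ x : E d,
    ‖iteratedFDeriv ℝ j VS x‖ ≤ C * jap x ^ (2 - ν - (j : ℝ)))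


lemma core_close {V : Type*} [NormedAddCommGroup V] [NormedSpace ℝ V] [FiniteDimensional ℝ V]
    (F G : V × V → V) (hF : ContDiff ℝ 1 F) (hG : ContDiff ℝ 1 G)
    (y η : ℝ → V) (hy : ∀ t, HasDerivAt y (F (y t, η t)) t)
    (hη : ∀ t, HasDerivAt η (G (y t, η t)) t)
    (T lam0 A M B : ℝ) (hT : 0 < T) (hl0 : 1 ≤ lam0) (hA : 0 ≤ A)
    (z ζ R : ℝ → ℝ → V)
    (hz : ∀ l, lam0 ≤ l → ∀ s, HasDerivAt (z l) (F (z l s, ζ l s)) s)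
    (hζ : ∀ l, lam0 ≤ l → ∀ s, HasDerivAt (ζ l) (G (z l s, ζ l s) + R l s) s)
    (hz0 : ∀ l, lam0 ≤ l → z l 0 = y 0) (hζ0 : ∀ l, lam0 ≤ l → ζ l 0 = η 0)
    (hFb : ∀ l, lam0 ≤ l → ∀ s, 0 ≤ s → s ≤ l * T → ‖F (z l s, ζ l s)‖ ≤ A)
    (hζb : ∀ l, lam0 ≤ l → ∀ s, 0 ≤ s → s ≤ l * T → ‖ζ l s‖ ≤ M)
    (hR : ∀ l, lam0 ≤ l → ∀ s, 0 ≤ s → s ≤ l * T → ‖R l s‖ ≤ B * l ^ (-(3/2) : ℝ))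
    (S : ℝ) (hS : 0 ≤ S) : Tendsto (fun l => ζ l S) atTop (𝓝 (η S)) := by
  have hyc : Continuous y := continuous_iff_continuousAt.2 fun t => (hy t).continuousAt
  have hηc : Continuous η := continuous_iff_continuousAt.2 fun t => (hη t).continuousAt
  obtain ⟨r1, hr1⟩ := (isCompact_Icc (a := (0:ℝ)) (b := S)).exists_bound_of_continuousOn
    (hyc.prodMk hηc).continuousOn
  set r : ℝ := max r1 (max (‖y 0‖ + A * S) M) with hr
  set v : V × V → V × V := fun p => (F p, G p) with hv
  have hvc : ContDiff ℝ 1 v := hF.prodMk hG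
  obtain ⟨K, hK⟩ := hvc.contDiffOn.exists_lipschitzOnWith (s := Metric.closedBall (0 : V × V) r) one_ne_zero
    (convex_closedBall _ _) (isCompact_closedBall _ _)
  have key : ∀ᶠ l in atTop, dist (ζ l S) (η S) ≤ gronwallBound 0 K (B * l ^ (-(3/2) : ℝ) + 0) (S - 0) := by
    filter_upwards [eventually_ge_atTop lam0, eventually_ge_atTop (S / T)] with l hl hlS
    have hlT : S ≤ l * T := by rwa [div_le_iff₀ hT] at hlS
    have hd := dist_le_of_approx_trajectories_ODE_of_mem (v := fun _ => v) (s := fun _ => Metric.closedBall (0 : V × V) r)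
      (K := K) (a := 0) (b := S) (f := fun s => (z l s, ζ l s)) (g := fun s => (y s, η s))
      (f' := fun s => (F (z l s, ζ l s), G (z l s, ζ l s) + R l s))
      (g' := fun s => (F (y s, η s), G (y s, η s)))
      (εf := B * l ^ (-(3/2) : ℝ)) (εg := 0) (δ := 0)
      (fun _ _ => hK)
      (fun s _ => ((hz l hl s).prodMk (hζ l hl s)).continuousAt.continuousWithinAt)
      (fun s _ => ((hz l hl s).prodMk (hζ l hl s)).hasDerivWithinAt)
      ?_ ?_
      (fun s _ => ((hy s).prodMk (hη s)).continuousAt.continuousWithinAt)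
      (fun s _ => ((hy s).prodMk (hη s)).hasDerivWithinAt)
      ?_ ?_ ?_ S ⟨hS, le_rfl⟩
    · refine le_trans ?_ hd
      rw [Prod.dist_eq]; exact le_max_right _ _
    · intro t ht
      have := hR l hl t ht.1 (ht.2.le.trans hlT)
      have h0 := (norm_nonneg _).trans this
      simp only [hv, Prod.dist_eq, dist_self]
      rw [dist_eq_norm]
      simp only [add_sub_cancel_left]
      exact max_le h0 this
    · intro t ht
      have h1 := norm_image_sub_le_of_norm_deriv_le_segment' (f := z l) (a := 0) (b := S) (C := A)
        (f' := fun s => F (z l s, ζ l s)) (fun s _ => (hz l hl s).hasDerivWithinAt)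
        (fun s hs => hFb l hl s hs.1 (hs.2.le.trans hlT)) t ⟨ht.1, ht.2.le⟩
      rw [hz0 l hl] at h1
      have h2 := hζb l hl t ht.1 (ht.2.le.trans hlT)
      have h3 : ‖z l t‖ ≤ ‖y 0‖ + A * S := by
        have := norm_le_norm_add_norm_sub' (z l t) (y 0)
        have h5 : A * (t - 0) ≤ A * S := mul_le_mul_of_nonneg_left (by linarith [ht.2]) hA
        linarith
      rw [mem_closedBall_zero_iff, Prod.norm_def]
      refine max_le ?_ ?_
      · exact h3.trans ((le_max_left _ _).trans (le_max_right _ _))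
      · exact h2.trans ((le_max_right _ _).trans (le_max_right _ _))
    · intro t ht; simp [hv]
    · intro t ht
      rw [mem_closedBall_zero_iff]
      exact (hr1 t ⟨ht.1, ht.2.le⟩).trans (le_max_left _ _)
    · simp [hz0 l hl, hζ0 l hl]
  rw [tendsto_iff_dist_tendsto_zero]
  refine squeeze_zero' (Eventually.of_forall fun _ => dist_nonneg) key ?_
  have h1 : Tendsto (fun l : ℝ => B * l ^ (-(3/2) : ℝ) + 0) atTop (𝓝 0) := by
    have := (tendsto_rpow_neg_atTop (y := 3/2) (by norm_num)).const_mul B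
    simpa using this
  have h2 := ((gronwallBound_continuous_ε 0 K (S - 0)).tendsto 0).comp h1
  rw [gronwallBound_ε0_δ0] at h2
  exact h2

lemma core {V : Type*} [NormedAddCommGroup V] [NormedSpace ℝ V] [FiniteDimensional ℝ V]
    (F G : V × V → V) (hF : ContDiff ℝ 1 F) (hG : ContDiff ℝ 1 G)
    (y η : ℝ → V) (hy : ∀ t, HasDerivAt y (F (y t, η t)) t)
    (hη : ∀ t, HasDerivAt η (G (y t, η t)) t)
    (ξp : V) (hξp : Tendsto η atTop (𝓝 ξp))
    (T lam0 A M B K : ℝ) (hT : 0 < T) (hl0 : 1 ≤ lam0) (hA : 0 ≤ A) (hK : 0 ≤ K)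
    (z ζ R : ℝ → ℝ → V)
    (hz : ∀ l, lam0 ≤ l → ∀ s, HasDerivAt (z l) (F (z l s, ζ l s)) s)
    (hζ : ∀ l, lam0 ≤ l → ∀ s, HasDerivAt (ζ l) (G (z l s, ζ l s) + R l s) s)
    (hz0 : ∀ l, lam0 ≤ l → z l 0 = y 0) (hζ0 : ∀ l, lam0 ≤ l → ζ l 0 = η 0)
    (hFb : ∀ l, lam0 ≤ l → ∀ s, 0 ≤ s → s ≤ l * T → ‖F (z l s, ζ l s)‖ ≤ A)
    (hGb : ∀ l, lam0 ≤ l → ∀ s, 0 < s → s ≤ l * T → ‖G (z l s, ζ l s)‖ ≤ K * s ^ (-(3/2) : ℝ))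
    (hζb : ∀ l, lam0 ≤ l → ∀ s, 0 ≤ s → s ≤ l * T → ‖ζ l s‖ ≤ M)
    (hR : ∀ l, lam0 ≤ l → ∀ s, 0 ≤ s → s ≤ l * T → ‖R l s‖ ≤ B * l ^ (-(3/2) : ℝ))
    (t : ℝ) (ht : 0 < t) (htT : t ≤ T) : Tendsto (fun l => ζ l (l * t)) atTop (𝓝 ξp) := by
  have hB : 0 ≤ B := by
    have h := (norm_nonneg _).trans (hR lam0 le_rfl 0 le_rfl (by positivity))
    exact nonneg_of_mul_nonneg_left h (Real.rpow_pos_of_pos (by linarith) _)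
  have tail : ∀ l, lam0 ≤ l → ∀ S, 0 < S → ∀ s, S ≤ s → s ≤ l * T →
      ‖ζ l s - ζ l S‖ ≤ 2 * K * S ^ (-(1/2) : ℝ) + B * T * l ^ (-(1/2) : ℝ) := by
    intro l hl S hS s hSs hs
    have hlpos : 0 < l := by linarith
    set Bf : ℝ → ℝ := fun x => 2 * K * (S ^ (-(1/2) : ℝ) - x ^ (-(1/2) : ℝ)) + B * l ^ (-(3/2) : ℝ) * (x - S) with hBf
    have hBd : ∀ x ∈ Set.Icc S s, HasDerivAt Bf (K * x ^ (-(3/2) : ℝ) + B * l ^ (-(3/2) : ℝ)) x := by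
      intro x hx
      have hx0 : 0 < x := by linarith [hx.1]
      have h1 := (Real.hasDerivAt_rpow_const (x := x) (p := -(1/2)) (Or.inl hx0.ne'))
      have h2 := (((hasDerivAt_const x (S ^ (-(1/2) : ℝ))).sub h1).const_mul (2 * K)).add
        (((hasDerivAt_id x).sub_const S).const_mul (B * l ^ (-(3/2) : ℝ)))
      refine h2.congr_deriv ?_
      rw [show (-(1/2) - 1 : ℝ) = -(3/2) by norm_num]; ring
    have := image_norm_le_of_norm_deriv_right_le_deriv_boundary' (f := fun x => ζ l x - ζ l S)
      (a := S) (b := s) (f' := fun x => G (z l x, ζ l x) + R l x) (B := Bf)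
      (B' := fun x => K * x ^ (-(3/2) : ℝ) + B * l ^ (-(3/2) : ℝ))
      (fun x _ => ((hζ l hl x).sub_const _).continuousAt.continuousWithinAt)
      (fun x _ => ((hζ l hl x).sub_const _).hasDerivWithinAt)
      (by simp [hBf])
      (fun x hx => (hBd x hx).continuousAt.continuousWithinAt)
      (fun x hx => (hBd x ⟨hx.1, hx.2.le⟩).hasDerivWithinAt)
      (fun x hx => (norm_add_le _ _).trans (add_le_add
        (hGb l hl x (by linarith [hx.1]) (by linarith [hx.2])) (hR l hl x (by linarith [hx.1]) (by linarith [hx.2]))))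
      (x := s) ⟨hSs, le_rfl⟩
    refine this.trans ?_
    have e1 : 0 ≤ s ^ (-(1/2) : ℝ) := Real.rpow_nonneg (by linarith) _
    have e2 : l ^ (-(3/2) : ℝ) * l = l ^ (-(1/2) : ℝ) := by
      rw [← Real.rpow_add_one hlpos.ne']; norm_num
    have e3 : 0 ≤ B * l ^ (-(3/2) : ℝ) := by positivity
    have e4 : B * l ^ (-(3/2) : ℝ) * (s - S) ≤ B * l ^ (-(3/2) : ℝ) * (l * T) :=
      mul_le_mul_of_nonneg_left (by linarith) e3
    have e5 : B * l ^ (-(3/2) : ℝ) * (l * T) = B * T * l ^ (-(1/2) : ℝ) := by rw [← e2]; ring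
    simp only [hBf]
    nlinarith [mul_nonneg hK e1]
  rw [Metric.tendsto_nhds]
  intro ε hε
  have t1 : Tendsto (fun S : ℝ => 2 * K * S ^ (-(1/2) : ℝ)) atTop (𝓝 0) := by
    simpa using (tendsto_rpow_neg_atTop (y := 1/2) (by norm_num)).const_mul (2 * K)
  have t2 : Tendsto (fun S : ℝ => B * T * S ^ (-(1/2) : ℝ)) atTop (𝓝 0) := by
    simpa using (tendsto_rpow_neg_atTop (y := 1/2) (by norm_num)).const_mul (B * T)
  have hε4 : 0 < ε / 4 := by linarith
  obtain ⟨S, hS1, hS2, hS0⟩ := ((t1.eventually (gt_mem_nhds hε4)).and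
    ((Metric.tendsto_nhds.1 hξp _ hε4).and (eventually_gt_atTop 0))).exists
  have hc := core_close F G hF hG y η hy hη T lam0 A M B hT hl0 hA z ζ R hz hζ hz0 hζ0 hFb hζb hR S hS0.le
  filter_upwards [Metric.tendsto_nhds.1 hc _ hε4, t2.eventually (gt_mem_nhds hε4),
    eventually_ge_atTop lam0, eventually_ge_atTop (S / t)] with l h1 h2 h3 h4
  rw [div_le_iff₀ ht] at h4
  have h5 := tail l h3 S hS0 (l * t) h4 (mul_le_mul_of_nonneg_left htT (by linarith))
  rw [← dist_eq_norm] at h5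
  have := dist_triangle4 (ζ l (l * t)) (ζ l S) (η S) ξp
  linarith

lemma one_le_jap {d : ℕ} (x : E d) : 1 ≤ jap x := by
  unfold jap; rw [Real.one_le_sqrt]; nlinarith [sq_nonneg ‖x‖]

lemma norm_le_jap {d : ℕ} (x : E d) : ‖x‖ ≤ jap x := by
  unfold jap; exact Real.le_sqrt_of_sq_le (by linarith)

lemma jap_le {d : ℕ} (x : E d) : jap x ≤ 1 + ‖x‖ := by
  unfold jap; rw [Real.sqrt_le_left (by positivity)]; nlinarith [norm_nonneg x]

lemma mid {d : ℕ} (F G : E d × E d → E d) (W : E d → E d)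
    (hF : ContDiff ℝ 1 F) (hG : ContDiff ℝ 1 G) (A : ℝ) (hA : 0 ≤ A)
    (hFh : ∀ z ζ (r : ℝ), F (z, r • ζ) = r • F (z, ζ))
    (hGh : ∀ z ζ (r : ℝ), G (z, r • ζ) = (r ^ 2) • G (z, ζ))
    (hFA : ∀ z ζ, ‖F (z, ζ)‖ ≤ A * ‖ζ‖)
    (hGA : ∀ z ζ, ‖G (z, ζ)‖ ≤ A * ‖ζ‖ ^ 2 * jap z ^ (-(3/2) : ℝ))
    (hWA : ∀ z, ‖W z‖ ≤ A * jap z ^ (1/2 : ℝ))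
    (y η : ℝ → E d) (hy : ∀ t, HasDerivAt y (F (y t, η t)) t)
    (hη : ∀ t, HasDerivAt η (G (y t, η t)) t)
    (ξp : E d) (hξp : Tendsto η atTop (𝓝 ξp))
    (X Ξ : ℝ → ℝ → E d) (T lam0 c' C' M : ℝ) (hT : 0 < T) (hlam0 : 1 ≤ lam0) (hc' : 0 < c')
    (hC' : 0 < C') (hM : 0 < M)
    (hX : ∀ l, lam0 ≤ l → ∀ s, HasDerivAt (X l) (F (X l s, Ξ l s)) s)
    (hΞ : ∀ l, lam0 ≤ l → ∀ s, HasDerivAt (Ξ l) (G (X l s, Ξ l s) + W (X l s)) s)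
    (hX0 : ∀ l, lam0 ≤ l → X l 0 = y 0) (hΞ0 : ∀ l, lam0 ≤ l → Ξ l 0 = l • η 0)
    (hbd : ∀ l : ℝ, lam0 ≤ l → ∀ s : ℝ, 0 ≤ s → s ≤ T →
      c' * l * s - C' ≤ ‖X l s‖ ∧ ‖Ξ l s‖ ≤ M * l)
    (t : ℝ) (ht : 0 < t) (htT : t ≤ T) :
    Tendsto (fun l : ℝ => l⁻¹ • Ξ l t) atTop (𝓝 ξp) := by
  set z : ℝ → ℝ → E d := fun l s => X l (l⁻¹ * s) with hz
  set ζ : ℝ → ℝ → E d := fun l s => l⁻¹ • Ξ l (l⁻¹ * s) with hζ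
  set R : ℝ → ℝ → E d := fun l s => (l⁻¹ ^ 2) • W (z l s) with hR
  have hmul : ∀ l s : ℝ, HasDerivAt (fun s => l⁻¹ * s) (l⁻¹) s := fun l s => by
    simpa using (hasDerivAt_id s).const_mul l⁻¹
  have hzd : ∀ l, lam0 ≤ l → ∀ s, HasDerivAt (z l) (F (z l s, ζ l s)) s := by
    intro l hl s
    have := (hX l hl (l⁻¹ * s)).scomp s (hmul l s)
    simp only [hz, hζ, hFh]
    exact this
  have hζd : ∀ l, lam0 ≤ l → ∀ s, HasDerivAt (ζ l) (G (z l s, ζ l s) + R l s) s := by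
    intro l hl s
    have := ((hΞ l hl (l⁻¹ * s)).scomp s (hmul l s)).const_smul l⁻¹
    refine this.congr_deriv ?_
    simp only [hz, hζ, hR, hGh, smul_add, smul_smul, sq]
  have hdom : ∀ l, lam0 ≤ l → ∀ s, 0 ≤ s → s ≤ l * T → 0 ≤ l⁻¹ * s ∧ l⁻¹ * s ≤ T := by
    intro l hl s hs hsT
    have hlpos : 0 < l := by linarith
    refine ⟨by positivity, ?_⟩
    rw [inv_mul_le_iff₀ hlpos]; exact hsT
  have hζb : ∀ l, lam0 ≤ l → ∀ s, 0 ≤ s → s ≤ l * T → ‖ζ l s‖ ≤ M := by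
    intro l hl s hs hsT
    have hlpos : 0 < l := by linarith
    have := hdom l hl s hs hsT
    have h2 := (hbd l hl _ this.1 this.2).2
    simp only [hζ, norm_smul, norm_inv, Real.norm_eq_abs, abs_of_pos hlpos]
    rw [inv_mul_le_iff₀ hlpos]; linarith
  have hzb : ∀ l, lam0 ≤ l → ∀ s, 0 ≤ s → s ≤ l * T → c' * s - C' ≤ ‖z l s‖ := by
    intro l hl s hs hsT
    have hlpos : 0 < l := by linarith
    have := hdom l hl s hs hsT
    have h2 := (hbd l hl _ this.1 this.2).1
    have e : c' * l * (l⁻¹ * s) = c' * s := by field_simp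
    rwa [e] at h2
  have hFb : ∀ l, lam0 ≤ l → ∀ s, 0 ≤ s → s ≤ l * T → ‖F (z l s, ζ l s)‖ ≤ A * M := by
    intro l hl s hs hsT
    exact (hFA _ _).trans (mul_le_mul_of_nonneg_left (hζb l hl s hs hsT) hA)
  have hz0 : ∀ l, lam0 ≤ l → z l 0 = y 0 := fun l hl => by simp [hz, hX0 l hl]
  have hζ0 : ∀ l, lam0 ≤ l → ζ l 0 = η 0 := fun l hl => by
    have hlpos : 0 < l := by linarith
    simp [hζ, hΞ0 l hl, smul_smul, hlpos.ne']
  have hzup : ∀ l, lam0 ≤ l → ∀ s, 0 ≤ s → s ≤ l * T → jap (z l s) ≤ (1 + ‖y 0‖ + A * M * T) * l := by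
    intro l hl s hs hsT
    have h1 := norm_image_sub_le_of_norm_deriv_le_segment' (f := z l) (a := 0) (b := l * T) (C := A * M)
        (f' := fun s => F (z l s, ζ l s)) (fun s _ => (hzd l hl s).hasDerivWithinAt)
        (fun s hs => hFb l hl s hs.1 hs.2.le) s ⟨hs, hsT⟩
    rw [hz0 l hl] at h1
    have h2 := norm_le_norm_add_norm_sub' (z l s) (y 0)
    have h3 := jap_le (z l s)
    have h4 : A * M * (s - 0) ≤ A * M * (l * T) := mul_le_mul_of_nonneg_left (by linarith) (by positivity)
    have h5 : (1 + ‖y 0‖) * 1 ≤ (1 + ‖y 0‖) * l := mul_le_mul_of_nonneg_left (by linarith) (by positivity)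
    nlinarith
  have hRb : ∀ l, lam0 ≤ l → ∀ s, 0 ≤ s → s ≤ l * T →
      ‖R l s‖ ≤ (A * (1 + ‖y 0‖ + A * M * T) ^ (1/2 : ℝ)) * l ^ (-(3/2) : ℝ) := by
    intro l hl s hs hsT
    have hlpos : 0 < l := by linarith
    have h1 := hzup l hl s hs hsT
    have h2 : jap (z l s) ^ (1/2 : ℝ) ≤ ((1 + ‖y 0‖ + A * M * T) * l) ^ (1/2 : ℝ) :=
      Real.rpow_le_rpow (by linarith [one_le_jap (z l s)]) h1 (by norm_num)
    rw [Real.mul_rpow (by positivity) hlpos.le] at h2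
    have h3 : l ^ (-(3/2) : ℝ) = l⁻¹ ^ 2 * l ^ (1/2 : ℝ) := by
      rw [show (-(3/2) : ℝ) = (-2 : ℝ) + 1/2 by norm_num, Real.rpow_add hlpos, Real.rpow_neg hlpos.le]
      norm_num
    simp only [hR, norm_smul, norm_pow, norm_inv, Real.norm_eq_abs, abs_of_pos hlpos]
    rw [h3]
    calc l⁻¹ ^ 2 * ‖W (z l s)‖ ≤ l⁻¹ ^ 2 * (A * ((1 + ‖y 0‖ + A * M * T) ^ (1/2 : ℝ) * l ^ (1/2 : ℝ))) := by
          gcongr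
          exact (hWA _).trans (mul_le_mul_of_nonneg_left h2 hA)
      _ = _ := by ring
  have hδ : 0 < c' / (1 + C') := by positivity
  have hGb : ∀ l, lam0 ≤ l → ∀ s, 0 < s → s ≤ l * T → ‖G (z l s, ζ l s)‖ ≤
      (A * M ^ 2 * (c' / (1 + C')) ^ (-(3/2) : ℝ)) * s ^ (-(3/2) : ℝ) := by
    intro l hl s hs hsT
    have h1 := hzb l hl s hs.le hsT
    have h2 := norm_le_jap (z l s)
    have h3 := one_le_jap (z l s)
    have h4 : c' / (1 + C') * s ≤ jap (z l s) := by
      rw [div_mul_eq_mul_div, div_le_iff₀ (by positivity)]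
      nlinarith
    have h5 : jap (z l s) ^ (-(3/2) : ℝ) ≤ (c' / (1 + C') * s) ^ (-(3/2) : ℝ) :=
      Real.rpow_le_rpow_of_nonpos (by positivity) h4 (by norm_num)
    rw [Real.mul_rpow hδ.le hs.le] at h5
    have h6 := hζb l hl s hs.le hsT
    calc _ ≤ _ := hGA _ _
      _ ≤ A * M ^ 2 * ((c' / (1 + C')) ^ (-(3/2) : ℝ) * s ^ (-(3/2) : ℝ)) := by
          have : 0 ≤ jap (z l s) ^ (-(3/2) : ℝ) := Real.rpow_nonneg (by linarith) _
          gcongr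
      _ = _ := by ring
  have := core F G hF hG y η hy hη ξp hξp T lam0 (A * M) M _ _ hT hlam0 (by positivity) (by positivity)
    z ζ R hzd hζd hz0 hζ0 hFb hGb hζb hRb t ht htT
  refine this.congr' ?_
  filter_upwards [eventually_gt_atTop 0] with l hl
  simp [hζ, hl.ne']

def FF {d : ℕ} (a : Fin d → Fin d → E d → ℝ) (p : E d × E d) : E d :=
  ∑ m : Fin d, ∑ n : Fin d, (1 / 2 * a m n p.1) •
    (p.2 n • EuclideanSpace.single m (1 : ℝ) + p.2 m • EuclideanSpace.single n (1 : ℝ))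

def GG {d : ℕ} (a : Fin d → Fin d → E d → ℝ) (p : E d × E d) : E d :=
  - ∑ m : Fin d, ∑ n : Fin d, (1 / 2 * p.2 m * p.2 n) • gradient (a m n) p.1

lemma kk_grad_xi {d : ℕ} (a : Fin d → Fin d → E d → ℝ) (x ξ : E d) :
    HasGradientAt (kk a x) (FF a (x, ξ)) ξ := by
  rw [hasGradientAt_iff_hasFDerivAt]
  have hp : ∀ m : Fin d, HasFDerivAt (fun ζ : E d => ζ m) (EuclideanSpace.proj (𝕜 := ℝ) m) ξ :=
    fun m => (EuclideanSpace.proj (𝕜 := ℝ) m : E d →L[ℝ] ℝ).hasFDerivAt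
  have h := (HasFDerivAt.fun_sum (u := Finset.univ) fun m _ =>
    HasFDerivAt.fun_sum (u := Finset.univ) fun n _ =>
      ((hp m).const_mul (a m n x)).mul (hp n)).const_mul (1/2 : ℝ)
  refine h.congr_fderiv ?_
  ext v
  simp [FF, sum_inner, inner_smul_left, inner_add_left, EuclideanSpace.inner_single_left, Finset.mul_sum]
  refine Finset.sum_congr rfl fun m _ => Finset.sum_congr rfl fun n _ => ?_
  ring

lemma kk_grad_x {d : ℕ} (a : Fin d → Fin d → E d → ℝ) (V : E d → ℝ) (x ξ : E d)
    (ha : ∀ m n, ContDiff ℝ (⊤ : ℕ∞) (a m n)) (hV : ContDiff ℝ (⊤ : ℕ∞) V) :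
    HasGradientAt (fun z => kk a z ξ + V z) (- GG a (x, ξ) + gradient V x) x := by
  rw [hasGradientAt_iff_hasFDerivAt]
  have hp : ∀ m n, HasFDerivAt (a m n) (fderiv ℝ (a m n) x) x :=
    fun m n => ((ha m n).differentiable (by simp) x).hasFDerivAt
  have h := ((HasFDerivAt.fun_sum (u := Finset.univ) fun m _ =>
    HasFDerivAt.fun_sum (u := Finset.univ) fun n _ =>
      ((hp m n).mul_const (ξ m)).mul_const (ξ n)).const_mul (1/2 : ℝ)).add
      ((hV.differentiable (by simp) x).hasFDerivAt)
  refine h.congr_fderiv ?_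
  ext v
  simp [GG, sum_inner, inner_smul_left, inner_add_left, inner_gradient_left, Finset.mul_sum]
  refine Finset.sum_congr rfl fun m _ => Finset.sum_congr rfl fun n _ => ?_
  ring

lemma contDiff_grad {d : ℕ} (f : E d → ℝ) (hf : ContDiff ℝ (⊤ : ℕ∞) f) :
    ContDiff ℝ 1 (gradient f) := by
  have h : ContDiff ℝ 1 (fderiv ℝ f) := hf.fderiv_right (by norm_cast)
  exact ((InnerProductSpace.toDual ℝ (E d)).symm.toContinuousLinearEquiv.contDiff).comp h

lemma norm_grad {d : ℕ} (f : E d → ℝ) (x : E d) : ‖gradient f x‖ = ‖fderiv ℝ f x‖ := by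
  unfold gradient; simp

lemma FF_contDiff {d : ℕ} (a : Fin d → Fin d → E d → ℝ)
    (ha : ∀ m n, ContDiff ℝ (⊤ : ℕ∞) (a m n)) : ContDiff ℝ 1 (FF a) := by
  unfold FF
  have ha' : ∀ m n, ContDiff ℝ 1 (fun p : E d × E d => a m n p.1) := fun m n =>
    ((ha m n).of_le (by norm_cast)).comp contDiff_fst
  have hp : ∀ m : Fin d, ContDiff ℝ 1 (fun p : E d × E d => p.2 m) := fun m =>
    (EuclideanSpace.proj (𝕜 := ℝ) m : E d →L[ℝ] ℝ).contDiff.comp contDiff_snd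
  refine ContDiff.sum fun m _ => ContDiff.sum fun n _ => ?_
  exact (contDiff_const.mul (ha' m n)).smul
    (((hp n).smul contDiff_const).add ((hp m).smul contDiff_const))

lemma GG_contDiff {d : ℕ} (a : Fin d → Fin d → E d → ℝ)
    (ha : ∀ m n, ContDiff ℝ (⊤ : ℕ∞) (a m n)) : ContDiff ℝ 1 (GG a) := by
  unfold GG
  have hp : ∀ m : Fin d, ContDiff ℝ 1 (fun p : E d × E d => p.2 m) := fun m =>
    (EuclideanSpace.proj (𝕜 := ℝ) m : E d →L[ℝ] ℝ).contDiff.comp contDiff_snd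
  refine ContDiff.neg (ContDiff.sum fun m _ => ContDiff.sum fun n _ => ?_)
  exact ((contDiff_const.mul (hp m)).mul (hp n)).smul ((contDiff_grad _ (ha m n)).comp contDiff_fst)

lemma FF_hom {d : ℕ} (a : Fin d → Fin d → E d → ℝ) (z ζ : E d) (r : ℝ) :
    FF a (z, r • ζ) = r • FF a (z, ζ) := by
  simp only [FF, Finset.smul_sum, PiLp.smul_apply, smul_eq_mul]
  refine Finset.sum_congr rfl fun m _ => Finset.sum_congr rfl fun n _ => ?_
  module

lemma GG_hom {d : ℕ} (a : Fin d → Fin d → E d → ℝ) (z ζ : E d) (r : ℝ) :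
    GG a (z, r • ζ) = (r ^ 2) • GG a (z, ζ) := by
  simp only [GG, Finset.smul_sum, PiLp.smul_apply, smul_eq_mul, smul_neg]
  congr 1
  refine Finset.sum_congr rfl fun m _ => Finset.sum_congr rfl fun n _ => ?_
  module

lemma FF_bound {d : ℕ} (a : Fin d → Fin d → E d → ℝ) (D : Fin d → Fin d → ℝ)
    (h : ∀ m n x, |a m n x| ≤ D m n) (z ζ : E d) :
    ‖FF a (z, ζ)‖ ≤ (∑ m, ∑ n, D m n) * ‖ζ‖ := by
  have hc : ∀ m, |ζ m| ≤ ‖ζ‖ := fun m => PiLp.norm_apply_le ζ m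
  simp only [FF, Finset.sum_mul]
  refine (norm_sum_le _ _).trans (Finset.sum_le_sum fun m _ => (norm_sum_le _ _).trans
    (Finset.sum_le_sum fun n _ => ?_))
  have h0 : 0 ≤ D m n := (abs_nonneg _).trans (h m n z)
  have h1 : ‖ζ n • EuclideanSpace.single m (1 : ℝ) + ζ m • EuclideanSpace.single n (1 : ℝ)‖
      ≤ 2 * ‖ζ‖ := by
    refine (norm_add_le _ _).trans ?_
    simp only [norm_smul, EuclideanSpace.norm_single, Real.norm_eq_abs, abs_one, mul_one]
    linarith [hc m, hc n]
  have h2 : ‖(1 / 2 * a m n z)‖ ≤ 1 / 2 * D m n := by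
    rw [norm_mul, Real.norm_eq_abs, Real.norm_eq_abs, abs_of_pos (by norm_num : (0:ℝ) < 1/2)]
    linarith [h m n z]
  rw [norm_smul]
  calc _ ≤ (1 / 2 * D m n) * (2 * ‖ζ‖) := mul_le_mul h2 h1 (norm_nonneg _) (by positivity)
    _ = _ := by ring

lemma GG_bound {d : ℕ} (a : Fin d → Fin d → E d → ℝ) (D : Fin d → Fin d → ℝ)
    (h : ∀ m n x, ‖gradient (a m n) x‖ ≤ D m n * jap x ^ (-(3/2) : ℝ)) (z ζ : E d) :
    ‖GG a (z, ζ)‖ ≤ (∑ m, ∑ n, D m n) * ‖ζ‖ ^ 2 * jap z ^ (-(3/2) : ℝ) := by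
  have hc : ∀ m, ‖ζ m‖ ≤ ‖ζ‖ := fun m => PiLp.norm_apply_le ζ m
  simp only [GG, Finset.sum_mul, norm_neg]
  refine (norm_sum_le _ _).trans (Finset.sum_le_sum fun m _ => (norm_sum_le _ _).trans
    (Finset.sum_le_sum fun n _ => ?_))
  have h2 : ‖1 / 2 * ζ m * ζ n‖ ≤ ‖ζ‖ ^ 2 := by
    rw [norm_mul, norm_mul, Real.norm_eq_abs (1/2), abs_of_pos (by norm_num : (0:ℝ) < 1/2)]
    have := mul_le_mul (hc m) (hc n) (norm_nonneg _) (norm_nonneg _)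
    nlinarith [mul_nonneg (norm_nonneg (ζ m)) (norm_nonneg (ζ n))]
  rw [norm_smul]
  calc _ ≤ ‖ζ‖ ^ 2 * (D m n * jap z ^ (-(3/2) : ℝ)) :=
        mul_le_mul h2 (h m n z) (norm_nonneg _) (by positivity)
    _ = _ := by ring

lemma jap_pow_le {d : ℕ} (x : E d) (p q D u : ℝ) (hpq : p ≤ q) (hD : 0 < D)
    (h : u ≤ D * jap x ^ p) : u ≤ D * jap x ^ q :=
  h.trans (mul_le_mul_of_nonneg_left (Real.rpow_le_rpow_of_exponent_le (one_le_jap x) hpq) hD.le)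

lemma hd_neg {V : Type*} [NormedAddCommGroup V] [NormedSpace ℝ V] {f : ℝ → V} {f' : V} {t : ℝ}
    (h : HasDerivAt f f' (-t)) : HasDerivAt (fun s => f (-s)) (-f') t := by
  have := h.scomp t (hasDerivAt_neg t)
  rw [neg_one_smul] at this
  exact this

/-- Theorem 6, high-energy asymptotics of the momentum. -/
theorem stmt9 (d : ℕ) (hd : 1 ≤ d) (μ ν : ℝ) (hμ : 1 / 2 < μ) (hμ1 : μ ≤ 1) (hν : 1 < ν)
    (a : Fin d → Fin d → E d → ℝ) (VL VS : E d → ℝ) (hAC : AssumptionC μ ν a VL VS)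
    (T : ℝ) (hT : 0 < T) (x0 ξ0 : E d) (hξ0 : ξ0 ≠ 0)
    (y η : ℝ → E d) (hyHam : IsHamiltonSol (kk a) y η) (hy0 : y 0 = x0) (hη0 : η 0 = ξ0)
    (c C : ℝ) (hc : 0 < c) (hC : 0 < C) (hnt : ∀ s : ℝ, c * |s| - C ≤ ‖y s‖)
    (ξp ξm : E d) (hξp : Tendsto η atTop (𝓝 ξp)) (hξm : Tendsto η atBot (𝓝 ξm))
    (X Ξ : ℝ → ℝ → E d)
    (hXHam : ∀ l : ℝ, 1 ≤ l →
      IsHamiltonSol (fun z ζ => kk a z ζ + (VL z + VS z)) (X l) (Ξ l) ∧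
        X l 0 = x0 ∧ Ξ l 0 = l • ξ0)
    (lam0 c' C' M : ℝ) (hlam0 : 1 ≤ lam0) (hc' : 0 < c') (hC' : 0 < C') (hM : 0 < M)
    (hbd : ∀ l : ℝ, lam0 ≤ l → ∀ s : ℝ, |s| ≤ T →
      c' * l * |s| - C' ≤ ‖X l s‖ ∧ ‖Ξ l s‖ ≤ M * l) :
    (∀ t : ℝ, 0 < t → t ≤ T → Tendsto (fun l : ℝ => l⁻¹ • Ξ l t) atTop (𝓝 ξp)) ∧
    (∀ t : ℝ, -T ≤ t → t < 0 → Tendsto (fun l : ℝ => l⁻¹ • Ξ l t) atTop (𝓝 ξm)) := by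
  obtain ⟨ha, -, -, hab, hVL, hVS, hVLb, hVSb⟩ := hAC
  choose D0 hD0 hD0b using fun m n => hab m n 0
  choose D1 hD1 hD1b using fun m n => hab m n 1
  obtain ⟨DL, hDL, hDLb⟩ := hVLb 1
  obtain ⟨DS, hDS, hDSb⟩ := hVSb 1
  have hV : ContDiff ℝ (⊤ : ℕ∞) (fun z => VL z + VS z) := hVL.add hVS
  have b0 : ∀ m n x, |a m n x| ≤ D0 m n + 1 := by
    intro m n x
    have h1 := jap_pow_le x _ 0 _ _ (by push_cast; linarith) (hD0 m n) (hD0b m n x)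
    rw [norm_iteratedFDeriv_zero, Real.rpow_zero, mul_one, Real.norm_eq_abs] at h1
    have h2 : |(if m = n then (1:ℝ) else 0)| ≤ 1 := by split_ifs <;> simp
    have h3 := abs_add_le (a m n x - if m = n then (1:ℝ) else 0) (if m = n then (1:ℝ) else 0)
    rw [sub_add_cancel] at h3
    linarith
  have b1 : ∀ m n x, ‖gradient (a m n) x‖ ≤ D1 m n * jap x ^ (-(3/2) : ℝ) := by
    intro m n x
    have h1 := jap_pow_le x _ (-(3/2)) _ _ (by push_cast; linarith) (hD1 m n) (hD1b m n x)
    rw [norm_iteratedFDeriv_one, fderiv_sub_const] at h1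
    rw [norm_grad]; exact h1
  have bW : ∀ x, ‖gradient (fun z => VL z + VS z) x‖ ≤ (DL + DS) * jap x ^ (1/2 : ℝ) := by
    intro x
    have h1 := jap_pow_le x _ (1/2) _ _ (by push_cast; linarith) hDL (hDLb x)
    have h2 := jap_pow_le x _ (1/2) _ _ (by push_cast; linarith) hDS (hDSb x)
    rw [norm_iteratedFDeriv_one] at h1 h2
    rw [norm_grad, fderiv_fun_add (hVL.differentiable (by simp) x) (hVS.differentiable (by simp) x)]
    refine (norm_add_le _ _).trans ?_
    linarith
  set W : E d → E d := fun z => - gradient (fun z => VL z + VS z) z with hW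
  set S0 : ℝ := ∑ m, ∑ n, (D0 m n + 1) with hS0
  set S1 : ℝ := ∑ m, ∑ n, D1 m n with hS1
  have hS0n : 0 ≤ S0 := Finset.sum_nonneg fun m _ => Finset.sum_nonneg fun n _ => by
    linarith [hD0 m n]
  have hS1n : 0 ≤ S1 := Finset.sum_nonneg fun m _ => Finset.sum_nonneg fun n _ => (hD1 m n).le
  set A : ℝ := S0 + S1 + (DL + DS) with hA
  have hAn : 0 ≤ A := by positivity
  have bF : ∀ z ζ, ‖FF a (z, ζ)‖ ≤ A * ‖ζ‖ := fun z ζ =>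
    (FF_bound a _ b0 z ζ).trans (mul_le_mul_of_nonneg_right (by linarith) (norm_nonneg _))
  have bG : ∀ z ζ, ‖GG a (z, ζ)‖ ≤ A * ‖ζ‖ ^ 2 * jap z ^ (-(3/2) : ℝ) := fun z ζ => by
    refine (GG_bound a _ b1 z ζ).trans ?_
    have : 0 ≤ jap z ^ (-(3/2) : ℝ) := Real.rpow_nonneg (by linarith [one_le_jap z]) _
    gcongr
    linarith
  have bW' : ∀ z, ‖W z‖ ≤ A * jap z ^ (1/2 : ℝ) := fun z => by
    have : 0 ≤ jap z ^ (1/2 : ℝ) := Real.rpow_nonneg (by linarith [one_le_jap z]) _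
    simp only [hW, norm_neg]
    exact (bW z).trans (mul_le_mul_of_nonneg_right (by linarith) this)
  have hy : ∀ t, HasDerivAt y (FF a (y t, η t)) t := fun t => by
    rw [← (kk_grad_xi a (y t) (η t)).gradient]; exact (hyHam t).1
  have hη : ∀ t, HasDerivAt η (GG a (y t, η t)) t := fun t => by
    have h := (kk_grad_x a (fun _ => 0) (y t) (η t) ha contDiff_const).gradient
    have h2 := (hyHam t).2
    simp only [add_zero] at h
    rw [h] at h2
    simpa using h2
  have hX : ∀ l, lam0 ≤ l → ∀ s, HasDerivAt (X l) (FF a (X l s, Ξ l s)) s := fun l hl s => by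
    have h := ((hXHam l (hlam0.trans hl)).1 s).1
    have hg : HasGradientAt (fun ζ => kk a (X l s) ζ + (VL (X l s) + VS (X l s)))
        (FF a (X l s, Ξ l s)) (Ξ l s) := by
      rw [hasGradientAt_iff_hasFDerivAt]
      exact (kk_grad_xi a (X l s) (Ξ l s)).hasFDerivAt.add_const _
    rw [← hg.gradient]; exact h
  have hΞ : ∀ l, lam0 ≤ l → ∀ s, HasDerivAt (Ξ l) (GG a (X l s, Ξ l s) + W (X l s)) s := fun l hl s => by
    have h := ((hXHam l (hlam0.trans hl)).1 s).2
    refine h.congr_deriv ?_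
    rw [(kk_grad_x a (fun z => VL z + VS z) (X l s) (Ξ l s) ha hV).gradient]
    simp only [hW]; abel
  have hX0 : ∀ l, lam0 ≤ l → X l 0 = y 0 := fun l hl => by
    rw [hy0]; exact (hXHam l (hlam0.trans hl)).2.1
  have hΞ0 : ∀ l, lam0 ≤ l → Ξ l 0 = l • η 0 := fun l hl => by
    rw [hη0]; exact (hXHam l (hlam0.trans hl)).2.2
  refine ⟨fun t ht htT => ?_, fun t htT ht => ?_⟩
  · refine mid (FF a) (GG a) W (FF_contDiff a ha) (GG_contDiff a ha) A hAn (FF_hom a) (GG_hom a)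
      bF bG bW' y η hy hη ξp hξp X Ξ T lam0 c' C' M hT hlam0 hc' hC' hM hX hΞ hX0 hΞ0 ?_ t ht htT
    intro l hl s hs hsT
    have := hbd l hl s (by rwa [abs_of_nonneg hs])
    rwa [abs_of_nonneg hs] at this
  · have := mid (fun p => - FF a p) (fun p => - GG a p) (fun z => - W z) (FF_contDiff a ha).neg
      (GG_contDiff a ha).neg A hAn (fun z ζ r => by simp [FF_hom]) (fun z ζ r => by simp [GG_hom])
      (fun z ζ => by simpa using bF z ζ) (fun z ζ => by rw [norm_neg]; exact bG z ζ)
      (fun z => by rw [norm_neg]; exact bW' z)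
      (fun s => y (-s)) (fun s => η (-s)) (fun s => hd_neg (hy (-s))) (fun s => hd_neg (hη (-s)))
      ξm (hξm.comp tendsto_neg_atTop_atBot) (fun l s => X l (-s)) (fun l s => Ξ l (-s))
      T lam0 c' C' M hT hlam0 hc' hC' hM (fun l hl s => hd_neg (hX l hl (-s)))
      (fun l hl s => (hd_neg (hΞ l hl (-s))).congr_deriv (by abel))
      (fun l hl => by simpa using hX0 l hl) (fun l hl => by simpa using hΞ0 l hl) ?_
      (-t) (by linarith) (by linarith)
    · simpa using this
    · intro l hl s hs hsT
      have := hbd l hl (-s) (by rwa [abs_neg, abs_of_nonneg hs])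
      rwa [abs_neg, abs_of_nonneg hs] at this
end
end
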